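/- arXiv:2310.09184 — 2 statements merged into one kernel-verified Lean document; each statement's English description precedes it below -/
import Mathlib

section
/- Let (A,+) be a group and let φ₀ = π^a, φ₁ = π^b for a permutation π of A of order m, where φ₀, φ₁ are automorphisms of (A,+) and a,b ∈ ℕ. Then the linear quasigroup x ∘ y = φ₀(x) + φ₁(y) satisfies a bracketing identity t ≈ t' if and only if a·ld_T(i) + b·rd_T(i) ≡ a·ld_{T'}(i) + b·rd_{T'}(i) (mod m) for all leaves i, where T, T' are the trees of t, t'. -/
/-- Binary trees: every internal vertex has exactly a left and a right child. -/
inductive BTree : Type where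
  | leaf : BTree
  | node : BTree → BTree → BTree

namespace BTree

/-- Number of leaves. -/
def numLeaves : BTree → ℕ
  | leaf => 1
  | node l r => l.numLeaves + r.numLeaves

/-- Addresses of the leaves in left-to-right order, as words over `{0,1}`;
`false` records a left step (0) and `true` a right step (1). -/
def addrs : BTree → List (List Bool)
  | leaf => [[]]
  | node l r => (l.addrs.map (fun w => false :: w)) ++ (r.addrs.map (fun w => true :: w))

/-- Address of the `i`-th leaf (0-indexed, left to right). -/
def addr (T : BTree) (i : ℕ) : List Bool := T.addrs.getD i []

/-- Left depth of the `i`-th leaf: number of left steps (0's) in its address. -/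
def ld (T : BTree) (i : ℕ) : ℕ := (T.addr i).count false

/-- Right depth of the `i`-th leaf: number of right steps (1's) in its address. -/
def rd (T : BTree) (i : ℕ) : ℕ := (T.addr i).count true

/-- Total depth of the `i`-th leaf. -/
def depth (T : BTree) (i : ℕ) : ℕ := (T.addr i).length

end BTree

/-- Evaluation of the bracketing corresponding to a binary tree, with the
variables `f k, f (k+1), ...` plugged in at the leaves, left to right. -/
def BTree.evalAux {A : Type*} (op : A → A → A) (f : ℕ → A) : BTree → ℕ → A
  | .leaf, k => f k
  | .node l r, k => op (l.evalAux op f k) (r.evalAux op f (k + l.numLeaves))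

/-- Term operation induced on `A` by the bracketing corresponding to `T`. -/
def BTree.eval {A : Type*} (op : A → A → A) (T : BTree) (f : ℕ → A) : A :=
  T.evalAux op f 0

/-- `φ_w` for a word `w` over `{0,1}`: `φ_ε = id`, `φ_{0w} = φ₀ ∘ φ_w`, `φ_{1w} = φ₁ ∘ φ_w`. -/
def phiWord {A : Type*} (φ₀ φ₁ : A → A) : List Bool → A → A
  | [] => id
  | c :: w => (if c then φ₁ else φ₀) ∘ phiWord φ₀ φ₁ w

theorem BTree.length_addrs (T : BTree) : T.addrs.length = T.numLeaves := by
  induction T with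
  | leaf => rfl
  | node l r ihl ihr => simp [BTree.addrs, BTree.numLeaves, ihl, ihr]

theorem BTree.addr_left (l r : BTree) (i : ℕ) (hi : i < l.numLeaves) :
    (BTree.node l r).addr i = false :: l.addr i := by
  have h := l.length_addrs
  simp [BTree.addr, BTree.addrs, List.getD_eq_getElem?_getD, List.getElem?_append, h, hi]

theorem BTree.addr_right (l r : BTree) (i : ℕ) (hi : i < r.numLeaves) :
    (BTree.node l r).addr (l.numLeaves + i) = true :: r.addr i := by
  have h := l.length_addrs
  have h' := r.length_addrs
  simp [BTree.addr, BTree.addrs, List.getD_eq_getElem?_getD, List.getElem?_append, h, h', hi]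

theorem pow_fix_zero {A : Type*} [AddGroup A] (π : Equiv.Perm A) (a b : ℕ)
    (h0 : ∀ x y : A, (π ^ a) (x + y) = (π ^ a) x + (π ^ a) y)
    (h1 : ∀ x y : A, (π ^ b) (x + y) = (π ^ b) x + (π ^ b) y) (c d : ℕ) :
    (π ^ (a * c + b * d)) 0 = 0 := by
  have z0 : (π ^ a) 0 = 0 := by simpa using h0 0 0
  have z1 : (π ^ b) 0 = 0 := by simpa using h1 0 0
  have w0 : ((π ^ a) ^ c) 0 = 0 := Function.IsFixedPt.perm_pow z0 c
  have w1 : ((π ^ b) ^ d) 0 = 0 := Function.IsFixedPt.perm_pow z1 d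
  rw [pow_add, pow_mul, pow_mul, Equiv.Perm.mul_apply, w1, w0]

theorem evalAux_eq_sum {A : Type*} [AddGroup A] (π : Equiv.Perm A) (a b : ℕ)
    (h0 : ∀ x y : A, (π ^ a) (x + y) = (π ^ a) x + (π ^ a) y)
    (h1 : ∀ x y : A, (π ^ b) (x + y) = (π ^ b) x + (π ^ b) y) (f : ℕ → A)
    (T : BTree) (k : ℕ) :
    T.evalAux (fun x y => (π ^ a) x + (π ^ b) y) f k =
      ((List.range T.numLeaves).map
        (fun i => (π ^ (a * T.ld i + b * T.rd i)) (f (k + i)))).sum := by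
  induction T generalizing k with
  | leaf => simp [BTree.evalAux, BTree.numLeaves, BTree.ld, BTree.rd, BTree.addr, BTree.addrs]
  | node l r ihl ihr =>
    have m0 : ∀ L : List A, (π ^ a) L.sum = (L.map (π ^ a)).sum :=
      fun L => map_list_sum (AddMonoidHom.mk' (π ^ a) h0) L
    have m1 : ∀ L : List A, (π ^ b) L.sum = (L.map (π ^ b)).sum :=
      fun L => map_list_sum (AddMonoidHom.mk' (π ^ b) h1) L
    simp only [BTree.evalAux, BTree.numLeaves, ihl, ihr, m0, m1, List.range_add,
      List.map_append, List.sum_append, List.map_map]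
    congr 2
    · apply List.map_congr_left
      intro i hi
      simp only [Function.comp, BTree.ld, BTree.rd, l.addr_left r i (List.mem_range.1 hi)]
      rw [← Equiv.Perm.mul_apply, ← pow_add]
      congr 2
      simp
      ring
    · apply List.map_congr_left
      intro i hi
      simp only [Function.comp, BTree.ld, BTree.rd, l.addr_right r i (List.mem_range.1 hi)]
      rw [← Equiv.Perm.mul_apply, ← pow_add, add_assoc]
      congr 2
      simp
      ring

/-- If `φ₀ = π^a` and `φ₁ = π^b` for a permutation `π` of order `m` (with both
powers automorphisms of `(A,+)`), then `x ∘ y = φ₀(x) + φ₁(y)` satisfies `t ≈ t'`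
iff `a·ld_T(i) + b·rd_T(i) ≡ a·ld_{T'}(i) + b·rd_{T'}(i) (mod m)` for all `i`. -/
theorem stmt13 (A : Type*) [AddGroup A] (π : Equiv.Perm A) (a b m : ℕ)
    (hm : orderOf π = m) (hm0 : 0 < m)
    (h0 : ∀ x y : A, (π ^ a) (x + y) = (π ^ a) x + (π ^ a) y)
    (h1 : ∀ x y : A, (π ^ b) (x + y) = (π ^ b) x + (π ^ b) y)
    (T T' : BTree) (n : ℕ) (hT : T.numLeaves = n) (hT' : T'.numLeaves = n) :
    (∀ f : ℕ → A, T.eval (fun x y => (π ^ a) x + (π ^ b) y) f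
        = T'.eval (fun x y => (π ^ a) x + (π ^ b) y) f) ↔
      ∀ i < n, Nat.ModEq m (a * T.ld i + b * T.rd i) (a * T'.ld i + b * T'.rd i) := by
  have hsum := fun (S : BTree) (f : ℕ → A) => evalAux_eq_sum π a b h0 h1 f S 0
  constructor
  · intro h i hi
    rw [← hm, ← pow_eq_pow_iff_modEq]
    ext x
    have key : ∀ S : BTree, S.numLeaves = n →
        S.eval (fun x y => (π ^ a) x + (π ^ b) y) (fun j => if j = i then x else 0)
          = (π ^ (a * S.ld i + b * S.rd i)) x := by
      intro S hS
      unfold BTree.eval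
      rw [hsum, List.sum_map_eq_nsmul_single i]
      · rw [List.count_eq_one_of_mem List.nodup_range (by simpa [hS] using hi)]
        simp
      · intro j hj _
        simp only [zero_add, if_neg hj]
        exact pow_fix_zero π a b h0 h1 _ _
    rw [← key T hT, ← key T' hT']
    exact h _
  · intro h f
    unfold BTree.eval
    rw [hsum, hsum, hT, hT']
    congr 1
    apply List.map_congr_left
    intro i hi
    have := h i (List.mem_range.1 hi)
    rw [← hm, ← pow_eq_pow_iff_modEq] at this
    rw [this]
end

section
/- For every two-dimensional subgroup Λ = ℤ(u,v) + ℤ(w,0) of ℤ×ℤ (with 0 ≤ u < w and v > 0), there exist a positive integer n and binary trees T, T' with n leaves such that the subgroup of ℤ×ℤ generated by { (ld_T(i)−ld_{T'}(i), rd_T(i)−rd_{T'}(i)) : 1 ≤ i ≤ n } equals Λ. -/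
open Relation

namespace BTree

/-- Leaf labels, starting with `p` at the root, adding `a` for left and `b` for right steps. -/
def lab {G : Type*} [AddCommGroup G] (a b : G) : G → BTree → List G
  | p, leaf => [p]
  | p, node l r => lab a b (p + a) l ++ lab a b (p + b) r

/-- One expansion of a letter in a word. -/
def Step {G : Type*} [AddCommGroup G] (a b : G) (s t : List G) : Prop :=
  ∃ l x r, s = l ++ x :: r ∧ t = l ++ (x + a) :: (x + b) :: r

/-- Iterated expansion. -/
abbrev Ex {G : Type*} [AddCommGroup G] (a b : G) (s t : List G) : Prop :=
  ReflTransGen (Step a b) s t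

/-- Having a common expansion. -/
abbrev Eqv {G : Type*} [AddCommGroup G] (a b : G) (s t : List G) : Prop :=
  Join (ReflTransGen (Step a b)) s t

/-- Right-hand letters obtained by `n` left steps. -/
def dw {G : Type*} [AddCommGroup G] (a b : G) (p : G) : ℕ → List G
  | 0 => []
  | n + 1 => (p + n • a + b) :: dw a b p n

/-- Left-hand letters obtained by `n` right steps. -/
def uw {G : Type*} [AddCommGroup G] (a b : G) (p : G) : ℕ → List G
  | 0 => []
  | n + 1 => uw a b p n ++ [p + n • b + a]

section words
variable {G : Type*} [AddCommGroup G] {a b : G}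

theorem Step.left (l : List G) {s t : List G} (h : Step a b s t) : Step a b (l ++ s) (l ++ t) := by
  obtain ⟨l', x, r, rfl, rfl⟩ := h
  exact ⟨l ++ l', x, r, by simp, by simp⟩

theorem Step.right (r : List G) {s t : List G} (h : Step a b s t) : Step a b (s ++ r) (t ++ r) := by
  obtain ⟨l', x, r', rfl, rfl⟩ := h
  exact ⟨l', x, r' ++ r, by simp, by simp⟩

theorem Ex.left (l : List G) {s t : List G} (h : Ex a b s t) : Ex a b (l ++ s) (l ++ t) :=
  ReflTransGen.lift (fun s => l ++ s) (fun _ _ h => Step.left l h) _ _ h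

theorem Ex.right (r : List G) {s t : List G} (h : Ex a b s t) : Ex a b (s ++ r) (t ++ r) :=
  ReflTransGen.lift (fun s => s ++ r) (fun _ _ h => Step.right r h) _ _ h

theorem Ex.app {s t s' t' : List G} (h : Ex a b s t) (h' : Ex a b s' t') :
    Ex a b (s ++ s') (t ++ t') :=
  (h.right s').trans (h'.left t)

theorem diamond (s t t' : List G) (h : Step a b s t) (h' : Step a b s t') :
    ∃ d, ReflGen (Step a b) t d ∧ ReflTransGen (Step a b) t' d := by
  obtain ⟨l, x, r, rfl, rfl⟩ := h
  obtain ⟨l', x', r', h, rfl⟩ := h'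
  rw [List.append_eq_append_iff] at h
  rcases h with ⟨c, rfl, h⟩ | ⟨c, rfl, h⟩
  · cases c with
    | nil => simp at h; obtain ⟨rfl, rfl⟩ := h; exact ⟨_, ReflGen.refl, by simpa using ReflTransGen.refl⟩
    | cons y c =>
      simp at h; obtain ⟨rfl, rfl⟩ := h
      refine ⟨l ++ (x + a) :: (x + b) :: c ++ (x' + a) :: (x' + b) :: r', ReflGen.single ?_, ReflTransGen.single ?_⟩
      · exact ⟨l ++ (x + a) :: (x + b) :: c, x', r', by simp, by simp⟩
      · exact ⟨l, x, c ++ (x' + a) :: (x' + b) :: r', by simp, by simp⟩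
  · cases c with
    | nil => simp at h; obtain ⟨rfl, rfl⟩ := h; exact ⟨_, ReflGen.refl, by simpa using ReflTransGen.refl⟩
    | cons y c =>
      simp at h; obtain ⟨rfl, rfl⟩ := h
      refine ⟨l' ++ (x' + a) :: (x' + b) :: c ++ (x + a) :: (x + b) :: r, ReflGen.single ?_, ReflTransGen.single ?_⟩
      · exact ⟨l', x', c ++ (x + a) :: (x + b) :: r, by simp, by simp⟩
      · exact ⟨l' ++ (x' + a) :: (x' + b) :: c, x, r, by simp, by simp⟩

theorem eqv_equivalence : Equivalence (Eqv a b) := equivalence_join_reflTransGen diamond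

theorem Eqv.tr {s t u : List G} (h : Eqv a b s t) (h' : Eqv a b t u) : Eqv a b s u :=
  eqv_equivalence.trans h h'

theorem Eqv.sy {s t : List G} (h : Eqv a b s t) : Eqv a b t s := eqv_equivalence.symm h

theorem Eqv.rf (s : List G) : Eqv a b s s := eqv_equivalence.refl s

theorem Ex.eqv {s t : List G} (h : Ex a b s t) : Eqv a b s t := ⟨t, h, ReflTransGen.refl⟩

theorem Eqv.app {s t s' t' : List G} (h : Eqv a b s t) (h' : Eqv a b s' t') :
    Eqv a b (s ++ s') (t ++ t') := by
  obtain ⟨c, h1, h2⟩ := h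
  obtain ⟨d, h3, h4⟩ := h'
  exact ⟨c ++ d, Ex.app h1 h3, Ex.app h2 h4⟩

theorem ex_one (x : G) : Ex a b [x] [x + a, x + b] :=
  ReflTransGen.single ⟨[], x, [], by simp, by simp⟩

theorem ex_dw (p : G) (n : ℕ) : Ex a b [p] ([p + n • a] ++ dw a b p n) := by
  induction n with
  | zero => simpa [dw] using ReflTransGen.refl
  | succ n ih =>
    have := ih.trans ((ex_one (a := a) (b := b) (p + n • a)).right (dw a b p n))
    simpa [dw, succ_nsmul, add_assoc] using this

theorem ex_uw (p : G) (n : ℕ) : Ex a b [p] (uw a b p n ++ [p + n • b]) := by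
  induction n with
  | zero => simpa [uw] using ReflTransGen.refl
  | succ n ih =>
    have := ih.trans ((ex_one (a := a) (b := b) (p + n • b)).left (uw a b p n))
    simpa [uw, succ_nsmul, add_assoc] using this

theorem dw_add (p : G) (m n : ℕ) : dw a b p (m + n) = dw a b (p + n • a) m ++ dw a b p n := by
  induction m with
  | zero => simp [dw]
  | succ m ih =>
    rw [show m + 1 + n = (m + n) + 1 by omega]
    simp only [dw, ih, List.cons_append, add_nsmul]
    congr 1; abel

theorem dw_last (p : G) (n : ℕ) : dw a b p (n + 1) = dw a b (p + a) n ++ [p + b] := by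
  rw [dw_add]; simp [dw]

theorem lab_step (T : BTree) : ∀ (p : G) (l : List G) (x : G) (r : List G),
    lab a b p T = l ++ x :: r → ∃ T', lab a b p T' = l ++ (x + a) :: (x + b) :: r := by
  induction T with
  | leaf =>
    intro p l x r h
    refine ⟨node leaf leaf, ?_⟩
    cases l with
    | nil => simp [lab] at h ⊢; obtain ⟨rfl, rfl⟩ := h; simp
    | cons y l => simp [lab] at h
  | node L R ihL ihR =>
    intro p l x r h
    simp only [lab] at h
    rw [List.append_eq_append_iff] at h
    rcases h with ⟨c, rfl, h⟩ | ⟨c, h1, h⟩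
    · obtain ⟨R', hR⟩ := ihR _ _ _ _ h
      exact ⟨node L R', by simp [lab, hR]⟩
    · cases c with
      | nil =>
        obtain ⟨R', hR⟩ := ihR _ [] x r (by simpa using h.symm)
        exact ⟨node L R', by simp [lab, hR, h1]⟩
      | cons y c =>
        simp at h; obtain ⟨rfl, rfl⟩ := h
        obtain ⟨L', hL⟩ := ihL _ _ _ _ h1
        exact ⟨node L' R, by simp [lab, hL]⟩

theorem lab_ex {p : G} {s : List G} (h : Ex a b [p] s) : ∃ T, lab a b p T = s := by
  induction h with
  | refl => exact ⟨leaf, rfl⟩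
  | tail _ h ih =>
    obtain ⟨T, hT⟩ := ih
    obtain ⟨l, x, r, rfl, rfl⟩ := h
    exact lab_step T _ _ _ _ hT

/-- The long path of the second construction. -/
theorem ex_path (x : G) (v w' n : ℕ) (q : G) (hq : q = x + a + v • b + w' • a) :
    Ex a b [x] ((uw a b (x + a) v ++ [q + a]) ++ [q + b + n • a] ++
      (dw a b (q + b) n ++ dw a b (x + a + v • b) w' ++ [x + b])) := by
  have h1 : Ex a b [x] ([x + a] ++ [x + b]) := ex_one x
  have h2 := (ex_uw (a := a) (b := b) (x + a) v)
  have h3 := (ex_dw (a := a) (b := b) (x + a + v • b) w')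
  rw [← hq] at h3
  have h4 : Ex a b [q] ([q + a] ++ [q + b]) := ex_one q
  have h5 := (ex_dw (a := a) (b := b) (q + b) n)
  have h6 := h4.trans (h5.left [q + a])
  have h7 := h3.trans (Ex.right _ h6)
  have h8 := h2.trans (Ex.left _ h7)
  have h9 := h1.trans (Ex.right _ h8)
  simpa [List.append_assoc] using h9

theorem absorb (w' : ℕ) (hw : (w' + 1) • a = 0) (x : G) (k : ℕ) : Eqv a b ([x] ++ dw a b (x + k • b) (w' + 1)) [x] := by
  have base : ∀ x : G, Eqv a b ([x] ++ dw a b x (w' + 1)) [x] := by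
    intro x
    have := (ex_dw (a := a) (b := b) x (w' + 1)).eqv.sy
    rwa [hw, add_zero] at this
  induction k with
  | zero => simpa using base x
  | succ k ih =>
    have e : x + (k + 1) • b = x + k • b + b := by rw [succ_nsmul, add_assoc]
    have h1 : Eqv a b (dw a b (x + k • b) (w' + 1) ++ dw a b (x + (k + 1) • b) (w' + 1))
        (dw a b (x + k • b) (w' + 1)) := by
      rw [dw_last (x + k • b), List.append_assoc, e]
      exact (Eqv.rf _).app (base _)
    have h2 := ih.sy.app (Eqv.rf (dw a b (x + (k + 1) • b) (w' + 1)))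
    rw [List.append_assoc] at h2
    exact h2.tr (((Eqv.rf [x]).app h1).tr ih)

theorem idem (w' m' : ℕ) (hw : (w' + 1) • a = 0) (hm : (m' + 1) • b = 0)
    (x : G) : Eqv a b (dw a b x (w' + 1) ++ dw a b x (w' + 1)) (dw a b x (w' + 1)) := by
  have h := absorb w' hw (b := b) (x + b) m'
  have e : x + b + m' • b = x := by
    rw [add_assoc, ← succ_nsmul', hm, add_zero]
  rw [e] at h
  have := (Eqv.rf (dw a b (x + a) w')).app h
  rwa [← List.append_assoc, ← dw_last] at this

theorem right_absorb (w' m' : ℕ) (hw : (w' + 1) • a = 0) (hm : (m' + 1) • b = 0)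
    (x : G) (u v : ℕ) (huv : u • a + v • b = 0) (q : G)
    (hq : q = x + v • b) :
    Eqv a b (dw a b (x + b) (w' + 1))
      (dw a b (q + b) (w' + 1 + u) ++ dw a b (x + a + v • b) w' ++ [x + b]) := by
  have hq' : q = x + a + v • b + w' • a := by
    have : a + w' • a = 0 := by rw [← succ_nsmul', hw]
    rw [hq, show x + a + v • b + w' • a = x + v • b + (a + w' • a) by abel, this, add_zero]
  have e : q + b + u • a = x + b := by
    rw [hq, show x + v • b + b + u • a = x + b + (u • a + v • b) by abel, huv, add_zero]
  rw [dw_add (q + b), e]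
  set S := dw a b (q + b) u ++ dw a b (x + a + v • b) w' ++ [x + b] with hS
  have p := (ex_path (a := a) (b := b) x v w' u q hq').eqv
  rw [e, ← hS] at p
  have p1 : Eqv a b [x + a] (uw a b (x + a) v ++ [q + a]) := by
    have := (ex_uw (a := a) (b := b) (x + a) v).eqv
    rwa [show x + a + v • b = q + a by rw [hq]; abel] at this
  have p2 : Eqv a b ([x + a] ++ [x + b] ++ S) ([x + a] ++ [x + b]) :=
    ((p1.app (Eqv.rf [x + b])).app (Eqv.rf S)).tr (p.sy.tr (ex_one x).eqv)
  have em : x + b + m' • b = x := by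
    rw [add_assoc, ← succ_nsmul', hm, add_zero]
  have p3 : Eqv a b [x + b] (uw a b (x + b) m' ++ ([x + a] ++ [x + b])) := by
    have := (ex_uw (a := a) (b := b) (x + b) (m' + 1)).eqv
    rw [hm, add_zero, uw, em] at this
    simpa using this
  have p4 : Eqv a b ([x + b] ++ S) [x + b] := by
    have h1 := p3.app (Eqv.rf S)
    rw [List.append_assoc] at h1
    exact h1.tr (((Eqv.rf _).app p2).tr p3.sy)
  have p5 : Eqv a b [x + b + b] (uw a b (x + b + b) m' ++ [x + b]) := by
    have := (ex_uw (a := a) (b := b) (x + b + b) m').eqv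
    rwa [show x + b + b + m' • b = x + b + m' • b + b by abel, em] at this
  have p6 : Eqv a b ([x + b + b] ++ S) [x + b + b] := by
    have h1 := p5.app (Eqv.rf S)
    rw [List.append_assoc] at h1
    exact h1.tr (((Eqv.rf _).app p4).tr p5.sy)
  have p7 := (Eqv.rf (dw a b (x + b + a) w')).app p6
  rw [← List.append_assoc, ← dw_last] at p7
  rw [List.append_assoc, List.append_assoc, ← List.append_assoc (dw a b (q + b) u), ← hS]
  exact p7.sy

end words

section lift
variable {G H : Type*} [AddCommGroup G] [AddCommGroup H] {a b : G} (φ : G →+ H)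

theorem map_dw (p : G) (n : ℕ) : (dw a b p n).map φ = dw (φ a) (φ b) (φ p) n := by
  induction n with
  | zero => rfl
  | succ n ih => simp [dw, ih]

theorem map_uw (p : G) (n : ℕ) : (uw a b p n).map φ = uw (φ a) (φ b) (φ p) n := by
  induction n with
  | zero => rfl
  | succ n ih => simp [uw, ih]

theorem lift_ex {L : List G} {s : List H} (h : Ex (φ a) (φ b) (L.map φ) s) :
    ∃ L', Ex a b L L' ∧ L'.map φ = s := by
  induction h with
  | refl => exact ⟨L, ReflTransGen.refl, rfl⟩
  | tail _ h ih =>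
    obtain ⟨L1, h1, h2⟩ := ih
    obtain ⟨l, x, r, rfl, rfl⟩ := h
    rw [List.map_eq_append_iff] at h2
    obtain ⟨l', c, rfl, rfl, h3⟩ := h2
    rw [List.map_eq_cons_iff] at h3
    obtain ⟨y, r', rfl, rfl, rfl⟩ := h3
    exact ⟨_, h1.tail ⟨l', y, r', rfl, rfl⟩, by simp⟩

/-- A pair of trees with congruent labels and a leaf with label difference `d`. -/
def Good (a b : G) (φ : G →+ H) (p d : G) : Prop :=
  ∃ T T' : BTree, (lab a b p T).map φ = (lab a b p T').map φ ∧
    ∃ M g N M' g' N', lab a b p T = M ++ [g] ++ N ∧ lab a b p T' = M' ++ [g'] ++ N' ∧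
      M.length = M'.length ∧ g - g' = d

theorem good_of {p g g' : G} {M N M' N' : List G} (h : Ex a b [p] (M ++ [g] ++ N))
    (h' : Ex a b [p] (M' ++ [g'] ++ N')) (hM : Eqv (φ a) (φ b) (M.map φ) (M'.map φ))
    (hN : Eqv (φ a) (φ b) (N.map φ) (N'.map φ)) (hg : φ g = φ g') : Good a b φ p (g - g') := by
  obtain ⟨s, h1, h2⟩ := hM
  obtain ⟨t, h3, h4⟩ := hN
  obtain ⟨M1, k1, e1⟩ := lift_ex φ h1
  obtain ⟨M2, k2, e2⟩ := lift_ex φ h2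
  obtain ⟨N1, k3, e3⟩ := lift_ex φ h3
  obtain ⟨N2, k4, e4⟩ := lift_ex φ h4
  obtain ⟨T, hT⟩ := lab_ex (h.trans ((k1.right [g]).app k3))
  obtain ⟨T', hT'⟩ := lab_ex (h'.trans ((k2.right [g']).app k4))
  refine ⟨T, T', ?_, M1, g, N1, M2, g', N2, hT, hT', ?_, rfl⟩
  · rw [hT, hT']; simp [e1, e2, e3, e4, hg]
  · have := congrArg List.length (e1.trans e2.symm)
    simpa using this

theorem good_one (w' m' : ℕ) (hw : (w' + 1) • φ a = 0)
    (hm : (m' + 1) • φ b = 0) (x : G) : Good a b φ x ((w' + 1) • a) := by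
  have h1 := ex_dw (a := a) (b := b) x (w' + 1 + (w' + 1))
  have h2 := ex_dw (a := a) (b := b) x (w' + 1)
  have := good_of (M := []) (M' := []) φ h1 h2 (Eqv.rf _)
    (by
      rw [map_dw, map_dw, dw_add, hw, add_zero]
      exact idem w' m' hw hm _)
    (by simp only [map_add, map_nsmul, add_nsmul _ (w' + 1), hw, add_zero])
  convert this using 1
  rw [add_nsmul _ (w' + 1) (w' + 1)]; abel

theorem good_two (w' m' u v : ℕ) (hw : (w' + 1) • φ a = 0)
    (hm : (m' + 1) • φ b = 0) (huv : u • φ a + v • φ b = 0) (x : G) :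
    Good a b φ x ((w' + 1 + u) • a + v • b) := by
  have hw2 : φ a + w' • φ a = 0 := by rw [← succ_nsmul', hw]
  have hq : φ (x + a + v • b + w' • a) = φ x + v • φ b := by
    simp only [map_add, map_nsmul]
    rw [show φ x + φ a + v • φ b + w' • φ a = φ x + v • φ b + (φ a + w' • φ a) by abel, hw2,
      add_zero]
  have h1 := ex_path (a := a) (b := b) x v w' (w' + 1 + u) _ rfl
  have h2 : Ex a b [x] ([x + a] ++ [x + b + (w' + 1) • a] ++ dw a b (x + b) (w' + 1)) := by
    have h3 : Ex a b [x] ([x + a] ++ [x + b]) := ex_one x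
    have := h3.trans ((ex_dw (a := a) (b := b) (x + b) (w' + 1)).left _)
    simpa using this
  have := good_of φ h1 h2
    (by
      have := (ex_uw (a := φ a) (b := φ b) (φ x + φ a) v).eqv.sy
      rw [List.map_append, map_uw, List.map_singleton, map_add φ (x + a + v • b + w' • a) a, hq, map_add,
        List.map_singleton, map_add]
      rwa [show φ x + v • φ b + φ a = φ x + φ a + v • φ b by abel])
    (by
      have := (right_absorb w' m' hw hm (φ x) u v huv _ rfl).sy
      simp only [List.map_append, map_dw, List.map_singleton, map_add φ _ b, hq]
      simpa only [map_add, map_nsmul] using this)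
    (by
      rw [map_add, map_add, hq, map_add, map_nsmul, map_nsmul, map_add, add_nsmul, hw, zero_add,
        add_zero,
        show φ x + v • φ b + φ b + u • φ a = φ x + φ b + (u • φ a + v • φ b) by abel, huv,
        add_zero])
  convert this using 1
  simp only [add_nsmul, one_nsmul]; abel

end lift

theorem lab_eq (T : BTree) : ∀ p : ℤ × ℤ, lab ((1, 0) : ℤ × ℤ) (0, 1) p T =
    T.addrs.map (fun w => p + ((w.count false : ℤ), (w.count true : ℤ))) := by
  induction T with
  | leaf => intro p; simp [lab, addrs, Prod.ext_iff]
  | node l r hl hr =>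
    intro p
    simp only [lab, addrs, hl, hr, List.map_append, List.map_map]
    congr 1 <;> apply List.map_congr_left <;> intro w _ <;>
      simp [Prod.ext_iff] <;> ring

theorem length_addrs_s16 (T : BTree) : T.addrs.length = T.numLeaves := by
  induction T with
  | leaf => rfl
  | node l r hl hr => simp [addrs, numLeaves, hl, hr]

theorem numLeaves_pos (T : BTree) : 0 < T.numLeaves := by
  induction T with
  | leaf => simp [numLeaves]
  | node l r hl hr => simp [numLeaves]; omega

theorem lab_get (T : BTree) (i : ℕ) (hi : i < T.numLeaves) :
    (lab ((1, 0) : ℤ × ℤ) (0, 1) 0 T)[i]? = some ((T.ld i : ℤ), (T.rd i : ℤ)) := by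
  rw [← length_addrs_s16] at hi
  simp [lab_eq, ld, rd, addr, hi, List.getD]

end BTree

open BTree

/-- Every two-dimensional parallelogram grid `ℤ(u,v) + ℤ(w,0)` (with
`0 ≤ u < w`, `v > 0`) is treealisable: it equals `Λ_{T,T'}` for some binary
trees `T, T'` with the same number of leaves. -/
theorem stmt16 (u v w : ℤ) (hu : 0 ≤ u) (huw : u < w) (hv : 0 < v) :
    ∃ (n : ℕ) (T T' : BTree), 0 < n ∧ T.numLeaves = n ∧ T'.numLeaves = n ∧
      AddSubgroup.closure
          {p : ℤ × ℤ | ∃ i < n,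
            p = ((T.ld i : ℤ) - (T'.ld i : ℤ), (T.rd i : ℤ) - (T'.rd i : ℤ))}
        = AddSubgroup.closure {(u, v), (w, 0)} := by
  obtain ⟨u, rfl⟩ := Int.eq_ofNat_of_zero_le hu
  obtain ⟨v, rfl⟩ := Int.eq_ofNat_of_zero_le hv.le
  obtain ⟨w, rfl⟩ := Int.eq_ofNat_of_zero_le (hu.trans huw.le)
  obtain ⟨w', rfl⟩ : ∃ w', w = w' + 1 := ⟨w - 1, by omega⟩
  set Λ : AddSubgroup (ℤ × ℤ) :=
    AddSubgroup.closure {((u : ℤ), (v : ℤ)), (((w' + 1 : ℕ) : ℤ), 0)} with hΛ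
  have m1 : ((u : ℤ), (v : ℤ)) ∈ Λ := AddSubgroup.subset_closure (by simp)
  have m2 : (((w' + 1 : ℕ) : ℤ), (0 : ℤ)) ∈ Λ := AddSubgroup.subset_closure (by simp)
  let φ : ℤ × ℤ →+ (ℤ × ℤ) ⧸ Λ := QuotientAddGroup.mk' Λ
  have hφ : ∀ p, φ p = 0 ↔ p ∈ Λ := fun p => QuotientAddGroup.eq_zero_iff p
  obtain ⟨m', hm'⟩ : ∃ m', (w' + 1) * v = m' + 1 :=
    ⟨(w' + 1) * v - 1, by
      have : 0 < (w' + 1) * v := Nat.mul_pos (by omega) (by omega)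
      omega⟩
  have hw : (w' + 1) • φ (1, 0) = 0 := by
    rw [← map_nsmul, hφ]; simpa using m2
  have huv : u • φ (1, 0) + v • φ (0, 1) = 0 := by
    rw [← map_nsmul, ← map_nsmul, ← map_add, hφ]; simpa using m1
  have hm : (m' + 1) • φ (0, 1) = 0 := by
    have h := congrArg (fun z => (w' + 1) • z) huv
    simp only [nsmul_add, nsmul_zero, ← mul_nsmul'] at h
    rw [mul_nsmul, hw, nsmul_zero, zero_add, hm'] at h
    exact h
  obtain ⟨T1, T1', e1, M, g, N, M', g', N', hT1, hT1', hl, hd⟩ :=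
    good_one (a := (1, 0)) (b := (0, 1)) φ w' m' hw hm (0 + (1, 0))
  obtain ⟨T2, T2', e2, K, f, J, K', f', J', hT2, hT2', hl', hd'⟩ :=
    good_two (a := (1, 0)) (b := (0, 1)) φ w' m' u v hw hm huv (0 + (0, 1))
  have hlab : (lab ((1, 0) : ℤ × ℤ) (0, 1) 0 (node T1 T2)).map φ =
      (lab ((1, 0) : ℤ × ℤ) (0, 1) 0 (node T1' T2')).map φ := by
    simp only [lab, List.map_append, e1, e2]
  have hn : (node T1' T2').numLeaves = (node T1 T2).numLeaves := by
    have := congrArg List.length hlab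
    simpa [lab_eq, length_addrs_s16] using this.symm
  have key : ∀ (i : ℕ) (x y : ℤ × ℤ),
      (lab ((1, 0) : ℤ × ℤ) (0, 1) 0 (node T1 T2))[i]? = some x →
      (lab ((1, 0) : ℤ × ℤ) (0, 1) 0 (node T1' T2'))[i]? = some y →
      x - y ∈ {p : ℤ × ℤ | ∃ i < (node T1 T2).numLeaves, p =
        (((node T1 T2).ld i : ℤ) - ((node T1' T2').ld i : ℤ),
          ((node T1 T2).rd i : ℤ) - ((node T1' T2').rd i : ℤ))} := by
    intro i x y hx hy
    have hi : i < (node T1 T2).numLeaves := by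
      obtain ⟨h, -⟩ := List.getElem?_eq_some_iff.1 hx
      simpa [lab_eq, length_addrs_s16] using h
    refine ⟨i, hi, ?_⟩
    rw [lab_get _ _ hi] at hx
    rw [lab_get _ _ (hn ▸ hi)] at hy
    simp only [Option.some.injEq] at hx hy
    rw [← hx, ← hy]; rfl
  refine ⟨_, node T1 T2, node T1' T2', numLeaves_pos _, rfl, hn, ?_⟩
  apply le_antisymm
  · rw [AddSubgroup.closure_le]
    rintro _ ⟨i, hi, rfl⟩
    have h := congrArg (fun l => l[i]?) hlab
    simp only [List.getElem?_map] at h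
    rw [lab_get _ _ hi, lab_get _ _ (hn ▸ hi)] at h
    simp only [Option.map_some, Option.some.injEq] at h
    rw [← sub_eq_zero, ← map_sub, hφ] at h
    exact h
  · have q1 := AddSubgroup.subset_closure (G := ℤ × ℤ) (key M.length g g'
      (by rw [lab, hT1]; simp) (by rw [lab, hT1', hl]; simp))
    have hlen : (lab ((1, 0) : ℤ × ℤ) (0, 1) (0 + (1, 0)) T1).length =
        (lab ((1, 0) : ℤ × ℤ) (0, 1) (0 + (1, 0)) T1').length := by
      simpa using congrArg List.length e1
    have q2 := AddSubgroup.subset_closure (G := ℤ × ℤ)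
      (key ((lab ((1, 0) : ℤ × ℤ) (0, 1) (0 + (1, 0)) T1).length + K.length) f f'
      (by rw [lab, List.getElem?_append_right (by omega), hT2]; simp)
      (by rw [lab, hlen, List.getElem?_append_right (by omega), hT2', hl']; simp))
    rw [hd] at q1
    rw [hd'] at q2
    rw [hΛ, AddSubgroup.closure_le]
    rintro p (rfl | rfl)
    · have := AddSubgroup.sub_mem _ q2 q1
      convert this using 1
      simp [Prod.ext_iff]
    · convert q1 using 1
      simp [Prod.ext_iff]
end
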